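/- Let ρ : ℝ^d → ℝ be measurable with 0 ≤ ρ ≤ R and v : ℝ^d → ℝ^d a bounded measurable vector field. Fix x ∈ ℝ^d, h ∈ (0,1], ℓ₀ > 0 and constants A, B, M > 0, and suppose that for every ℓ ∈ (0, ℓ₀]: δv(ℓ;x) ≤ A ℓ^h, δρ(ℓ;x) ≤ B ℓ, and ρ̄_ℓ(x) ≥ 1/M. Then there exists a constant C, depending only on G, d, R, A, B, M, h and ℓ₀, such that the deformation work satisfies |Π_ℓ(x)| ≤ C ℓ^{3h−1} for all ℓ ∈ (0, ℓ₀]. -/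

import Mathlib

/-!
Write `w(r) = G_ℓ(r) ρ(x+r)`, a nonnegative weight supported in `|r| < ℓ` with total mass `ρ̄_ℓ(x)`,
and `c = A ℓ^h`, which bounds `|v(x+r) - v(x)|` on that support. The Favre average is the average
with respect to `w / ρ̄_ℓ(x)`, so `|ṽ_ℓ(x) - v(x)| ≤ c`, and the Favre stress is a covariance for the
same probability weight. Covariances are unchanged when constants are subtracted, so each stress
entry is at most `2 c²` (`QT.abs_cov_le`).

For the gradient, the derivatives of `ρ̄_ℓ` and of the averaged momentum fall on the kernel
(`QT.hasFDerivAt_cg`), and the quotient rule gives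
`ρ̄_ℓ ∂_i ṽ_j = -∫ ∂_i G_ℓ(r) ρ(x+r) (v_j(x+r) - ṽ_j(x)) dr` (`QT.gradMat_favre`).
Since `∫ |∂_i G_ℓ| ≤ ℓ⁻¹ ∫ |∇G|`, this is at most `2 R c ℓ⁻¹ ∫ |∇G|`. Multiplying the two bounds
gives `O(ℓ⁻¹ c³) = O(ℓ^(3h-1))`.
-/


open MeasureTheory Metric
open scoped RealInnerProductSpace ENNReal

noncomputable section

abbrev Euc (d : ℕ) := EuclideanSpace ℝ (Fin d)

namespace QT

variable {d : ℕ}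

/-- `G` is a mollifier: smooth, nonnegative, supported in the open unit ball, integral one. -/
structure IsMollifier {d : ℕ} (G : Euc d → ℝ) : Prop where
  smooth : ContDiff ℝ (⊤ : ℕ∞) G
  nonneg : ∀ r, 0 ≤ G r
  supp : tsupport G ⊆ ball (0 : Euc d) 1
  integral_one : ∫ r, G r = 1

/-- The rescaled mollifier `G_ℓ(r) = ℓ^{-d} G(r/ℓ)`. -/
def resc (G : Euc d → ℝ) (ℓ : ℝ) (r : Euc d) : ℝ := (ℓ ^ d)⁻¹ * G (ℓ⁻¹ • r)

/-- Coarse-grained field `ā_ℓ(x) = ∫ G_ℓ(r) a(x+r) dr`. -/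
def cg {E : Type*} [NormedAddCommGroup E] [NormedSpace ℝ E]
    (G : Euc d → ℝ) (ℓ : ℝ) (a : Euc d → E) (x : Euc d) : E :=
  ∫ r, resc G ℓ r • a (x + r)

/-- Increment `δa(r;x) = a(x+r) - a(x)`. -/
def incr {E : Type*} [NormedAddCommGroup E] (a : Euc d → E) (r x : Euc d) : E :=
  a (x + r) - a x

/-- `δa(ℓ;x) = sup_{|r|<ℓ} |δa(r;x)|`. -/
def supIncr {E : Type*} [NormedAddCommGroup E] (a : Euc d → E) (ℓ : ℝ) (x : Euc d) : ℝ :=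
  ⨆ r ∈ ball (0 : Euc d) ℓ, ‖incr a r x‖

/-- Second-order coarse-graining cumulant `τ̄_ℓ(f,g)`. -/
def tau2 (G : Euc d → ℝ) (ℓ : ℝ) (f g : Euc d → ℝ) (x : Euc d) : ℝ :=
  cg G ℓ (fun y => f y * g y) x - cg G ℓ f x * cg G ℓ g x

/-- `τ̄_ℓ(ρ, v)` for a scalar density and a vector field. -/
def tauV (G : Euc d → ℝ) (ℓ : ℝ) (ρ : Euc d → ℝ) (v : Euc d → Euc d) (x : Euc d) : Euc d :=
  cg G ℓ (fun y => ρ y • v y) x - cg G ℓ ρ x • cg G ℓ v x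

/-- `i`-th standard basis vector. -/
def e (d : ℕ) (i : Fin d) : Euc d := EuclideanSpace.single i (1 : ℝ)

/-- Partial derivative `∂_i f(x)`. -/
def pd (i : Fin d) (f : Euc d → ℝ) (x : Euc d) : ℝ := fderiv ℝ f x (e d i)

/-- Laplacian. -/
def lap (f : Euc d → ℝ) (x : Euc d) : ℝ := ∑ i, pd i (fun y => pd i f y) x

/-- Gradient matrix `(∇v)_{ij} = ∂_i v_j`. -/
def gradMat (v : Euc d → Euc d) (x : Euc d) : Matrix (Fin d) (Fin d) ℝ :=
  Matrix.of fun i j => pd i (fun y => v y j) x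

/-- Frobenius norm of a matrix. -/
def frobNorm (A : Matrix (Fin d) (Fin d) ℝ) : ℝ := Real.sqrt (∑ i, ∑ j, A i j ^ 2)

/-- Frobenius inner product `A : B`. -/
def frobInner (A B : Matrix (Fin d) (Fin d) ℝ) : ℝ := ∑ i, ∑ j, A i j * B i j

/-- Favre-averaged velocity `ṽ_ℓ = \overline{(ρv)}_ℓ/ρ̄_ℓ` where `ρ̄_ℓ > 0`, `0` otherwise. -/
def favre (G : Euc d → ℝ) (ℓ : ℝ) (ρ : Euc d → ℝ) (v : Euc d → Euc d) (x : Euc d) : Euc d :=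
  if 0 < cg G ℓ ρ x then (cg G ℓ ρ x)⁻¹ • cg G ℓ (fun y => ρ y • v y) x else 0

/-- Favre stress `τ̃_ℓ(v,v) = \overline{(ρ v⊗v)}_ℓ/ρ̄_ℓ − ṽ_ℓ ⊗ ṽ_ℓ`. -/
def favreStress (G : Euc d → ℝ) (ℓ : ℝ) (ρ : Euc d → ℝ) (v : Euc d → Euc d) (x : Euc d) :
    Matrix (Fin d) (Fin d) ℝ :=
  Matrix.of fun i j =>
    (cg G ℓ ρ x)⁻¹ * cg G ℓ (fun y => ρ y * (v y i * v y j)) x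
      - favre G ℓ ρ v x i * favre G ℓ ρ v x j

/-- Deformation work `Π_ℓ = −ρ̄_ℓ ∇ṽ_ℓ : τ̃_ℓ(v,v)`. -/
def deformWork (G : Euc d → ℝ) (ℓ : ℝ) (ρ : Euc d → ℝ) (v : Euc d → Euc d) (x : Euc d) : ℝ :=
  -(cg G ℓ ρ x * frobInner (gradMat (favre G ℓ ρ v) x) (favreStress G ℓ ρ v x))

/-- The periodic box `[0,𝓛]^d`. -/
def box (d : ℕ) (L : ℝ) : Set (Euc d) := {x | ∀ i, x i ∈ Set.Icc (0 : ℝ) L}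

/-- Normalized measure on the periodic box, so that `eLpNorm · p (boxMeasure d 𝓛)`
is the normalized `L^p` norm `(𝓛^{-d}∫_{[0,𝓛]^d}|f|^p)^{1/p}` (ess-sup for `p = ∞`). -/
def boxMeasure (d : ℕ) (L : ℝ) : Measure (Euc d) :=
  (ENNReal.ofReal (L ^ d))⁻¹ • (volume.restrict (box d L))

/-- `𝓛`-periodicity in each coordinate. -/
def PeriodicF {E : Type*} (L : ℝ) (f : Euc d → E) : Prop :=
  ∀ (x : Euc d) (i : Fin d), f (x + EuclideanSpace.single i L) = f x

/-- Quantum stress `Σ = (ħ²/4m²)(Δρ)I − (ħ²/m²)∇√ρ ⊗ ∇√ρ`. -/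
def qStress (hb m : ℝ) (ρ : Euc d → ℝ) (x : Euc d) : Matrix (Fin d) (Fin d) ℝ :=
  Matrix.of fun i j =>
    (hb ^ 2 / (4 * m ^ 2)) * lap ρ x * (if i = j then (1 : ℝ) else 0)
      - (hb ^ 2 / m ^ 2) * (gradient (fun y => Real.sqrt (ρ y)) x i
          * gradient (fun y => Real.sqrt (ρ y)) x j)

/-- Coarse-grained quantum stress `Σ̄_ℓ`. -/
def cgStress (G : Euc d → ℝ) (ℓ hb m : ℝ) (ρ : Euc d → ℝ) (x : Euc d) :
    Matrix (Fin d) (Fin d) ℝ :=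
  Matrix.of fun i j => cg G ℓ (fun z => qStress hb m ρ z i j) x

/-- Row-wise divergence of the coarse-grained quantum stress, `(∇·Σ̄_ℓ)_j = ∑_i ∂_i (Σ̄_ℓ)_{ij}`. -/
def divCgStress (G : Euc d → ℝ) (ℓ hb m : ℝ) (ρ : Euc d → ℝ) (x : Euc d) : Euc d :=
  (EuclideanSpace.equiv (Fin d) ℝ).symm
    (fun j => ∑ i, pd i (fun y => cgStress G ℓ hb m ρ y i j) x)

/-- Quantum baropycnal work `Λ^{(Σ)}_ℓ = −(1/ρ̄_ℓ)(∇·Σ̄_ℓ)·τ̄_ℓ(ρ,v)`. -/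
def qBaroWork (G : Euc d → ℝ) (ℓ hb m : ℝ) (ρ : Euc d → ℝ) (v : Euc d → Euc d) (x : Euc d) : ℝ :=
  -((cg G ℓ ρ x)⁻¹ * ⟪divCgStress G ℓ hb m ρ x, tauV G ℓ ρ v x⟫)

end QT

namespace QT

/-- Boundedness of `a` matters: the real supremum defining `supIncr` would be `0` on an unbounded
family. -/
lemma norm_incr_le {d : ℕ} {E : Type*} [NormedAddCommGroup E] {a : Euc d → E} {K ℓ c : ℝ}
    {x : Euc d} (hK : ∀ y, ‖a y‖ ≤ K) (h : supIncr a ℓ x ≤ c) {r : Euc d} (hr : ‖r‖ < ℓ) :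
    ‖a (x + r) - a x‖ ≤ c := by
  have hK0 : 0 ≤ K := (norm_nonneg _).trans (hK x)
  have hle : ∀ r, ‖incr a r x‖ ≤ 2 * K := fun r => by
    have h1 := norm_sub_le (a (x + r)) (a x)
    have h2 := hK (x + r)
    have h3 := hK x
    unfold incr
    linarith
  have hb : ∀ r, (⨆ _ : r ∈ ball (0 : Euc d) ℓ, ‖incr a r x‖) ≤ 2 * K := fun r =>
    Real.iSup_le (fun _ => hle r) (by positivity)
  have hmem : r ∈ ball (0 : Euc d) ℓ := by simpa using hr
  have h1 : ‖incr a r x‖ ≤ ⨆ _ : r ∈ ball (0 : Euc d) ℓ, ‖incr a r x‖ :=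
    le_ciSup (f := fun _ : r ∈ ball (0 : Euc d) ℓ => ‖incr a r x‖)
      ⟨2 * K, by rintro _ ⟨_, rfl⟩; exact hle r⟩ hmem
  have h2 : (⨆ _ : r ∈ ball (0 : Euc d) ℓ, ‖incr a r x‖) ≤ supIncr a ℓ x :=
    le_ciSup (f := fun r => ⨆ _ : r ∈ ball (0 : Euc d) ℓ, ‖incr a r x‖)
      ⟨2 * K, by rintro _ ⟨r, rfl⟩; exact hb r⟩ r
  exact (h1.trans h2).trans h

/-! ### The rescaled kernel and derivatives of coarse-grained fields -/

section Kernel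

variable {d : ℕ} {G : Euc d → ℝ} (hG : IsMollifier G) {ℓ : ℝ} (hℓ : 0 < ℓ)

include hG in
lemma IsMollifier.hasCompactSupport : HasCompactSupport G :=
  (isCompact_closedBall (0 : Euc d) 1).of_isClosed_subset (isClosed_tsupport G)
    (hG.supp.trans ball_subset_closedBall)

include hℓ in
lemma norm_inv_smul_ge {r : Euc d} (hr : ℓ ≤ ‖r‖) : 1 ≤ ‖ℓ⁻¹ • r‖ := by
  rw [norm_smul, norm_inv, Real.norm_of_nonneg hℓ.le, inv_mul_eq_div, le_div_iff₀ hℓ]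
  linarith

include hG in
lemma notMem_tsupport {s : Euc d} (hs : 1 ≤ ‖s‖) : s ∉ tsupport G := fun h => by
  have := hG.supp h
  simp at this
  linarith

include hG hℓ in
lemma resc_eq_zero {r : Euc d} (hr : ℓ ≤ ‖r‖) : resc G ℓ r = 0 := by
  simp [resc, image_eq_zero_of_notMem_tsupport
    (notMem_tsupport hG (norm_inv_smul_ge hℓ hr))]

include hG hℓ in
lemma resc_nonneg (r : Euc d) : 0 ≤ resc G ℓ r :=
  mul_nonneg (by positivity) (hG.nonneg _)

include hG in
lemma contDiff_resc : ContDiff ℝ 1 (resc G ℓ) :=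
  contDiff_const.mul ((hG.smooth.of_le (by exact_mod_cast le_top)).comp (contDiff_const_smul _))

include hG hℓ in
lemma hasCompactSupport_resc : HasCompactSupport (resc G ℓ) :=
  HasCompactSupport.of_support_subset_isCompact (isCompact_closedBall (0 : Euc d) ℓ) fun r hr => by
    by_contra h
    exact hr (resc_eq_zero hG hℓ (by simpa using (not_le.1 fun h' => h (by simpa using h')).le))

include hG hℓ in
lemma integrable_resc : Integrable (resc G ℓ) :=
  (contDiff_resc hG).continuous.integrable_of_hasCompactSupport (hasCompactSupport_resc hG hℓ)

/-- The kernel whose correlation against a field gives `∂_i` of the coarse-grained field,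
namely `-∂_i G_ℓ` (the sign comes from `cg` evaluating the field at `x + r`). -/
def dker (G : Euc d → ℝ) (ℓ : ℝ) (i : Fin d) (r : Euc d) : ℝ := -fderiv ℝ (resc G ℓ) r (e d i)

include hG hℓ in
lemma integrable_dker (i : Fin d) : Integrable (dker G ℓ i) := by
  have hc : Continuous (fderiv ℝ (resc G ℓ)) :=
    (contDiff_resc hG).continuous_fderiv (by simp)
  exact (((hc.integrable_of_hasCompactSupport
    ((hasCompactSupport_resc hG hℓ).fderiv (𝕜 := ℝ))).apply_continuousLinearMap (e d i))).neg

include hG in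
lemma abs_dker_le (i : Fin d) (hℓ : 0 < ℓ) (r : Euc d) :
    |dker G ℓ i r| ≤ ℓ⁻¹ * ((ℓ ^ d)⁻¹ * ‖fderiv ℝ G (ℓ⁻¹ • r)‖) := by
  have hd : HasFDerivAt (resc G ℓ)
      ((ℓ ^ d)⁻¹ • (fderiv ℝ G (ℓ⁻¹ • r)).comp (ℓ⁻¹ • ContinuousLinearMap.id ℝ (Euc d))) r := by
    have h1 : HasFDerivAt G (fderiv ℝ G (ℓ⁻¹ • r)) (ℓ⁻¹ • r) :=
      (hG.smooth.differentiable (by simp) _).hasFDerivAt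
    exact (h1.comp r ((hasFDerivAt_id r).const_smul ℓ⁻¹)).const_mul _
  have he : ‖e d i‖ = 1 := by simp [e]
  have h2 := (fderiv ℝ G (ℓ⁻¹ • r)).le_opNorm (e d i)
  rw [he, mul_one, Real.norm_eq_abs] at h2
  rw [dker, hd.fderiv, abs_neg]
  simp only [smul_apply, ContinuousLinearMap.comp_apply,
    ContinuousLinearMap.id_apply, map_smul, smul_eq_mul, abs_mul, abs_inv, abs_pow,
    abs_of_pos hℓ]
  rw [mul_left_comm]
  gcongr

include hG hℓ in
lemma dker_eq_zero (i : Fin d) {r : Euc d} (hr : ℓ ≤ ‖r‖) : dker G ℓ i r = 0 := by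
  have h0 : fderiv ℝ G (ℓ⁻¹ • r) = 0 := image_eq_zero_of_notMem_tsupport fun h =>
    notMem_tsupport hG (norm_inv_smul_ge hℓ hr) (tsupport_fderiv_subset ℝ h)
  have := abs_dker_le hG i hℓ r
  simpa [h0] using this

include hG hℓ in
/-- Differentiating `G_ℓ` costs one factor `ℓ⁻¹` in `L¹`; the normalisation `ℓ^{-d}` is absorbed by
the change of variables. -/
lemma integral_abs_dker_le (i : Fin d) :
    ∫ r, |dker G ℓ i r| ≤ (∫ r, ‖fderiv ℝ G r‖) * ℓ⁻¹ := by
  have hc : Continuous (fderiv ℝ G) := hG.smooth.continuous_fderiv (by simp)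
  have hi : Integrable fun r => ‖fderiv ℝ G r‖ :=
    (hc.integrable_of_hasCompactSupport (hG.hasCompactSupport.fderiv (𝕜 := ℝ))).norm
  have hi' : Integrable fun r : Euc d => ℓ⁻¹ * ((ℓ ^ d)⁻¹ * ‖fderiv ℝ G (ℓ⁻¹ • r)‖) :=
    ((hi.comp_smul (inv_ne_zero hℓ.ne')).const_mul _).const_mul _
  refine (integral_mono (integrable_dker hG hℓ i).abs hi' (abs_dker_le hG i hℓ)).trans ?_
  rw [integral_const_mul, integral_const_mul,
    Measure.integral_comp_inv_smul_of_nonneg volume (fun r => ‖fderiv ℝ G r‖) hℓ.le]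
  simp only [finrank_euclideanSpace, Fintype.card_fin, smul_eq_mul]
  rw [inv_mul_cancel_left₀ (by positivity), mul_comm]

include hG hℓ in
/-- Coarse-graining is convolution with the reflected kernel, so the derivative falls on the
kernel and no regularity of the field is needed. -/
lemma hasFDerivAt_cg {a : Euc d → ℝ} (ha : Measurable a) {K : ℝ} (hK : ∀ y, |a y| ≤ K)
    (x : Euc d) : ∃ L : Euc d →L[ℝ] ℝ, HasFDerivAt (cg G ℓ a) L x ∧
      ∀ i, L (e d i) = ∫ r, dker G ℓ i r * a (x + r) := by
  set g : Euc d → ℝ := fun s => resc G ℓ (-s) with hg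
  have hgc : ContDiff ℝ 1 g := (contDiff_resc hG).comp contDiff_neg
  have hgs : HasCompactSupport g :=
    (hasCompactSupport_resc hG hℓ).comp_homeomorph (Homeomorph.neg (Euc d))
  have hal : LocallyIntegrable a := by
    refine (locallyIntegrable_const K).mono ha.aestronglyMeasurable (.of_forall fun y => ?_)
    exact (hK y).trans (le_abs_self K)
  have heq : cg G ℓ a = convolution a g (ContinuousLinearMap.mul ℝ ℝ) volume := by
    funext y
    rw [cg, convolution]
    refine Eq.trans ?_ (integral_add_left_eq_self
      (fun t => ContinuousLinearMap.mul ℝ ℝ (a t) (g (y - t))) y)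
    refine integral_congr_ae (.of_forall fun r => ?_)
    simp [hg, mul_comm]
  have hD := hgs.hasFDerivAt_convolution_right (ContinuousLinearMap.mul ℝ ℝ) hal hgc x
  rw [← heq] at hD
  refine ⟨_, hD, fun i => ?_⟩
  rw [convolution_precompR_apply _ hal (hgs.fderiv (𝕜 := ℝ))
    (hgc.continuous_fderiv (by simp)), convolution, ← integral_add_left_eq_self _ x]
  refine integral_congr_ae (.of_forall fun r => ?_)
  have : fderiv ℝ g (-r) (e d i) = dker G ℓ i r := by
    have h1 : HasFDerivAt g ((fderiv ℝ (resc G ℓ) (- -r)).comp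
        (-ContinuousLinearMap.id ℝ (Euc d))) (-r) :=
      HasFDerivAt.comp (-r) ((contDiff_resc hG).differentiable (by simp) _).hasFDerivAt
        (hasFDerivAt_id (-r)).neg
    rw [h1.fderiv]
    simp [dker]
  simp [this, mul_comm]

end Kernel

/-! ### Weighted averages and covariances -/

lemma abs_integral_mul_le {α : Type*} [MeasurableSpace α] {μ : Measure α} {w f : α → ℝ} {c : ℝ}
    (hw : Integrable w μ) (hf : ∀ r, w r ≠ 0 → |f r| ≤ c) :
    |∫ r, w r * f r ∂μ| ≤ (∫ r, |w r| ∂μ) * c := by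
  rw [← integral_mul_const, ← Real.norm_eq_abs]
  refine norm_integral_le_of_norm_le (hw.abs.mul_const c) (.of_forall fun r => ?_)
  rw [Real.norm_eq_abs, abs_mul]
  by_cases h : w r = 0
  · simp [h]
  · exact mul_le_mul_of_nonneg_left (hf r h) (abs_nonneg _)

/-- A `w`-average of `f` is as close to `a` as `f` is on the support of `w`. -/
lemma abs_avg_sub_le {α : Type*} [MeasurableSpace α] {μ : Measure α} {w f : α → ℝ} {a c : ℝ}
    (hw : Integrable w μ) (hw0 : ∀ r, 0 ≤ w r) (hpos : 0 < ∫ r, w r ∂μ)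
    (hwf : Integrable (fun r => w r * f r) μ) (hf : ∀ r, w r ≠ 0 → |f r - a| ≤ c) :
    |(∫ r, w r ∂μ)⁻¹ * (∫ r, w r * f r ∂μ) - a| ≤ c := by
  have h1 := abs_integral_mul_le hw hf
  have h2 : ∫ r, w r * (f r - a) ∂μ = (∫ r, w r * f r ∂μ) - (∫ r, w r ∂μ) * a := by
    simp_rw [mul_sub]
    rw [integral_sub hwf (hw.mul_const a), integral_mul_const]
  simp_rw [abs_of_nonneg (hw0 _)] at h1
  have h3 : (∫ r, w r ∂μ)⁻¹ * (∫ r, w r * f r ∂μ) - a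
      = (∫ r, w r ∂μ)⁻¹ * ∫ r, w r * (f r - a) ∂μ := by
    rw [h2]; field_simp
  rw [h3, abs_mul, abs_inv, abs_of_pos hpos, inv_mul_le_iff₀ hpos]
  exact h1

/-- A weighted covariance is invariant under shifts of both factors by constants, hence is
quadratic in the increments. -/
lemma abs_cov_le {α : Type*} [MeasurableSpace α] {μ : Measure α} {w f g : α → ℝ} {a b c : ℝ}
    (hw : Integrable w μ) (hw0 : ∀ r, 0 ≤ w r) (hpos : 0 < ∫ r, w r ∂μ)
    (hwf : Integrable (fun r => w r * f r) μ) (hwg : Integrable (fun r => w r * g r) μ)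
    (hwfg : Integrable (fun r => w r * (f r * g r)) μ) (hc : 0 ≤ c)
    (hf : ∀ r, w r ≠ 0 → |f r - a| ≤ c) (hg : ∀ r, w r ≠ 0 → |g r - b| ≤ c) :
    |(∫ r, w r ∂μ)⁻¹ * (∫ r, w r * (f r * g r) ∂μ)
      - ((∫ r, w r ∂μ)⁻¹ * ∫ r, w r * f r ∂μ) * ((∫ r, w r ∂μ)⁻¹ * ∫ r, w r * g r ∂μ)|
      ≤ 2 * c ^ 2 := by
  have hF := abs_avg_sub_le hw hw0 hpos hwf hf
  have hGG := abs_avg_sub_le hw hw0 hpos hwg hg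
  have h1 := abs_integral_mul_le (f := fun r => (f r - a) * (g r - b)) (c := c * c) hw
    fun r hr => by
      rw [abs_mul]; exact mul_le_mul (hf r hr) (hg r hr) (abs_nonneg _) hc
  simp_rw [abs_of_nonneg (hw0 _)] at h1
  have h2 : ∫ r, w r * ((f r - a) * (g r - b)) ∂μ = (∫ r, w r * (f r * g r) ∂μ)
      - (∫ r, w r * f r ∂μ) * b - (∫ r, w r * g r ∂μ) * a + (∫ r, w r ∂μ) * (a * b) := by
    have e1 : Integrable (fun r => w r * (f r * g r) - w r * f r * b) μ :=
      hwfg.sub (hwf.mul_const b)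
    have e2 : Integrable (fun r => w r * (f r * g r) - w r * f r * b - w r * g r * a) μ :=
      e1.sub (hwg.mul_const a)
    rw [← integral_mul_const, ← integral_mul_const, ← integral_mul_const,
      ← integral_sub hwfg (hwf.mul_const b), ← integral_sub e1 (hwg.mul_const a),
      ← integral_add e2 (hw.mul_const _)]
    exact integral_congr_ae (.of_forall fun r => by ring)
  have h3 : |(∫ r, w r ∂μ)⁻¹ * ∫ r, w r * ((f r - a) * (g r - b)) ∂μ| ≤ c * c := by
    rw [abs_mul, abs_inv, abs_of_pos hpos, inv_mul_le_iff₀ hpos]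
    exact h1
  rw [h2] at h3
  set W := ∫ r, w r ∂μ
  set F := ∫ r, w r * f r ∂μ
  set H := ∫ r, w r * g r ∂μ
  set P := ∫ r, w r * (f r * g r) ∂μ
  have h4 : |(W⁻¹ * F - a) * (W⁻¹ * H - b)| ≤ c * c := by
    rw [abs_mul]; exact mul_le_mul hF hGG (abs_nonneg _) hc
  have h5 : W⁻¹ * P - (W⁻¹ * F) * (W⁻¹ * H)
      = W⁻¹ * (P - F * b - H * a + W * (a * b)) - (W⁻¹ * F - a) * (W⁻¹ * H - b) := by
    field_simp
    ring
  rw [h5]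
  refine (abs_sub _ _).trans ?_
  linarith

/-! ### Favre average, stress and gradient -/

section Favre

variable {d : ℕ} {G : Euc d → ℝ} (hG : IsMollifier G) {ℓ R Cv c : ℝ} (hℓ : 0 < ℓ)
  {ρ : Euc d → ℝ} {v : Euc d → Euc d} {x : Euc d}
  (hρ : Measurable ρ) (hρ0 : ∀ y, 0 ≤ ρ y) (hρR : ∀ y, ρ y ≤ R)
  (hv : Measurable v) (hvC : ∀ y, ‖v y‖ ≤ Cv)
  (hinc : ∀ r, ‖r‖ < ℓ → ‖v (x + r) - v x‖ ≤ c) (hpos : 0 < cg G ℓ ρ x)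

include hv in
lemma measurable_coord (j : Fin d) : Measurable fun y => v y j :=
  (EuclideanSpace.proj (𝕜 := ℝ) j).continuous.measurable.comp hv

include hvC in
lemma abs_coord_le (j : Fin d) (y : Euc d) : |v y j| ≤ Cv :=
  (PiLp.norm_apply_le (v y) j).trans (hvC y)

include hG hℓ hρ hρ0 hρR in
lemma integrable_weight (y : Euc d) : Integrable fun r => resc G ℓ r * ρ (y + r) :=
  (integrable_resc hG hℓ).mul_bdd (c := R) (hρ.comp (measurable_const_add y)).aestronglyMeasurable
    (.of_forall fun r => by rw [Real.norm_of_nonneg (hρ0 _)]; exact hρR _)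

include hG hℓ hρ hρ0 hρR in
lemma integrable_weight_mul {f : Euc d → ℝ} (hf : Measurable f) {K : ℝ} (hK : ∀ y, |f y| ≤ K)
    (y : Euc d) : Integrable fun r => resc G ℓ r * ρ (y + r) * f (y + r) :=
  (integrable_weight hG hℓ hρ hρ0 hρR y).mul_bdd (c := K)
    (hf.comp (measurable_const_add y)).aestronglyMeasurable
    (.of_forall fun _ => hK _)

include hG hℓ hρ hρ0 hρR hv hvC in
lemma cg_smul_apply (y : Euc d) (j : Fin d) :
    cg G ℓ (fun y => ρ y • v y) y j = cg G ℓ (fun y => ρ y * v y j) y := by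
  have hi : Integrable fun r => resc G ℓ r • ρ (y + r) • v (y + r) := by
    simp_rw [smul_smul]
    exact (integrable_weight hG hℓ hρ hρ0 hρR y).smul_bdd Cv
      (hv.comp (measurable_const_add y)).aestronglyMeasurable (.of_forall fun _ => hvC _)
  have := (EuclideanSpace.proj (𝕜 := ℝ) j).integral_comp_comm hi
  exact this.symm

include hG hℓ hρ hρ0 hρR hv hvC in
lemma favre_apply {y : Euc d} (hy : 0 < cg G ℓ ρ y) (j : Fin d) :
    favre G ℓ ρ v y j = (cg G ℓ ρ y)⁻¹ * cg G ℓ (fun y => ρ y * v y j) y := by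
  rw [favre, if_pos hy, PiLp.smul_apply, cg_smul_apply hG hℓ hρ hρ0 hρR hv hvC, smul_eq_mul]

include hG hℓ hinc in
lemma abs_incr_coord_le (j : Fin d) (r : Euc d) (hr : resc G ℓ r * ρ (x + r) ≠ 0) :
    |v (x + r) j - v x j| ≤ c := by
  have h1 : ‖r‖ < ℓ := by
    by_contra h
    exact hr (by rw [resc_eq_zero hG hℓ (not_lt.1 h), zero_mul])
  exact (PiLp.norm_apply_le (v (x + r) - v x) j).trans (hinc r h1)

include hG hℓ hρ hρ0 hρR hv hvC hinc hpos in
lemma abs_favre_sub_le (j : Fin d) : |favre G ℓ ρ v x j - v x j| ≤ c := by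
  rw [favre_apply hG hℓ hρ hρ0 hρR hv hvC hpos]
  have := abs_avg_sub_le (integrable_weight hG hℓ hρ hρ0 hρR x)
    (fun r => mul_nonneg (resc_nonneg hG hℓ r) (hρ0 _)) hpos
    (integrable_weight_mul hG hℓ hρ hρ0 hρR (measurable_coord hv j) (abs_coord_le hvC j) x)
    (abs_incr_coord_le hG hℓ hinc j)
  simpa only [cg, smul_eq_mul, mul_assoc] using this

include hG hℓ hρ hρ0 hρR hv hvC hinc hpos in
lemma abs_favreStress_le (i j : Fin d) : |favreStress G ℓ ρ v x i j| ≤ 2 * c ^ 2 := by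
  have hc : 0 ≤ c := (norm_nonneg _).trans (hinc 0 (by simpa using hℓ))
  have := abs_cov_le (integrable_weight hG hℓ hρ hρ0 hρR x)
    (fun r => mul_nonneg (resc_nonneg hG hℓ r) (hρ0 _)) hpos
    (integrable_weight_mul hG hℓ hρ hρ0 hρR (measurable_coord hv i) (abs_coord_le hvC i) x)
    (integrable_weight_mul hG hℓ hρ hρ0 hρR (measurable_coord hv j) (abs_coord_le hvC j) x)
    (integrable_weight_mul hG hℓ hρ hρ0 hρR (f := fun y => v y i * v y j) (K := Cv * Cv)
      ((measurable_coord hv i).mul (measurable_coord hv j))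
      (fun y => by
        rw [abs_mul]
        exact mul_le_mul (abs_coord_le hvC i y) (abs_coord_le hvC j y) (abs_nonneg _)
          ((norm_nonneg _).trans (hvC x))) x) hc
    (abs_incr_coord_le hG hℓ hinc i) (abs_incr_coord_le hG hℓ hinc j)
  simp only [favreStress, Matrix.of_apply, favre_apply hG hℓ hρ hρ0 hρR hv hvC hpos]
  simpa only [cg, smul_eq_mul, mul_assoc] using this

include hG hℓ hρ hρ0 hρR hv hvC hpos in
/-- The quotient rule collects into one integral in which `∂_i G_ℓ` is paired with the
fluctuation of `v` about its Favre average. -/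
lemma gradMat_favre (i j : Fin d) : gradMat (favre G ℓ ρ v) x i j = (cg G ℓ ρ x)⁻¹ *
    ∫ r, dker G ℓ i r * (ρ (x + r) * (v (x + r) j - favre G ℓ ρ v x j)) := by
  have hρb : ∀ y, |ρ y| ≤ R := fun y => by rw [abs_of_nonneg (hρ0 y)]; exact hρR y
  have hm : Measurable fun y => ρ y * v y j := hρ.mul (measurable_coord hv j)
  have hmb : ∀ y, |ρ y * v y j| ≤ R * Cv := fun y => by
    rw [abs_mul]
    exact mul_le_mul (hρb y) (abs_coord_le hvC j y) (abs_nonneg _) ((abs_nonneg _).trans (hρb y))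
  obtain ⟨L, hL, hLi⟩ := hasFDerivAt_cg hG hℓ hρ hρb x
  obtain ⟨L', hL', hLi'⟩ := hasFDerivAt_cg hG hℓ hm hmb x
  -- `favre` is defined by cases; the nonzero branch persists near `x` by continuity.
  have hev : (fun y => favre G ℓ ρ v y j) =ᶠ[nhds x]
      fun y => (cg G ℓ ρ y)⁻¹ * cg G ℓ (fun y => ρ y * v y j) y := by
    filter_upwards [hL.continuousAt.eventually (lt_mem_nhds hpos)] with y hy
    exact favre_apply hG hℓ hρ hρ0 hρR hv hvC hy j
  have hinv := ((hasDerivAt_inv hpos.ne').comp_hasFDerivAt x hL).mul hL'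
  have hfd := hev.fderiv_eq.trans hinv.fderiv
  have hi1 : Integrable fun r => dker G ℓ i r * (ρ (x + r) * v (x + r) j) :=
    (integrable_dker hG hℓ i).mul_bdd (c := R * Cv)
      (hm.comp (measurable_const_add x)).aestronglyMeasurable (.of_forall fun r => hmb _)
  have hi2 : Integrable fun r => dker G ℓ i r * ρ (x + r) :=
    (integrable_dker hG hℓ i).mul_bdd (c := R)
      (hρ.comp (measurable_const_add x)).aestronglyMeasurable (.of_forall fun r => hρb _)
  have hint : ∫ r, dker G ℓ i r * (ρ (x + r) * (v (x + r) j - favre G ℓ ρ v x j))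
      = L' (e d i) - L (e d i) * favre G ℓ ρ v x j := by
    rw [hLi, hLi', ← integral_mul_const, ← integral_sub hi1 (hi2.mul_const _)]
    exact integral_congr_ae (.of_forall fun r => by simp; ring)
  rw [hint, gradMat, Matrix.of_apply, pd, hfd, favre_apply hG hℓ hρ hρ0 hρR hv hvC hpos]
  simp
  field_simp
  ring

include hG hℓ hρ hρ0 hρR hv hvC hinc hpos in
lemma abs_gradMat_favre_le (i j : Fin d) : |cg G ℓ ρ x * gradMat (favre G ℓ ρ v) x i j| ≤
    (∫ r, ‖fderiv ℝ G r‖) * ℓ⁻¹ * (R * (2 * c)) := by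
  have hc : 0 ≤ c := (norm_nonneg _).trans (hinc 0 (by simpa using hℓ))
  have hR : 0 ≤ R := (hρ0 x).trans (hρR x)
  rw [gradMat_favre hG hℓ hρ hρ0 hρR hv hvC hpos, mul_inv_cancel_left₀ hpos.ne']
  refine (abs_integral_mul_le (c := R * (2 * c)) (integrable_dker hG hℓ i) fun r hr => ?_).trans
    (mul_le_mul_of_nonneg_right (integral_abs_dker_le hG hℓ i) (by positivity))
  have hr' : ‖r‖ < ℓ := by
    by_contra h
    exact hr (dker_eq_zero hG hℓ i (not_lt.1 h))
  rw [abs_mul, abs_of_nonneg (hρ0 _)]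
  refine mul_le_mul (hρR _) ?_ (abs_nonneg _) hR
  have h1 : |v (x + r) j - v x j| ≤ c :=
    (PiLp.norm_apply_le (v (x + r) - v x) j).trans (hinc r hr')
  have h2 := abs_favre_sub_le hG hℓ hρ hρ0 hρR hv hvC hinc hpos j
  rw [abs_le] at *
  constructor <;> linarith [h1.1, h1.2, h2.1, h2.2]

include hG hℓ hρ hρ0 hρR hv hvC hinc hpos in
lemma abs_deformWork_le : |deformWork G ℓ ρ v x| ≤
    d * (d * ((∫ r, ‖fderiv ℝ G r‖) * ℓ⁻¹ * (R * (2 * c)) * (2 * c ^ 2))) := by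
  rw [deformWork, abs_neg, frobInner, Finset.mul_sum]
  simp_rw [Finset.mul_sum]
  have hterm : ∀ i j, |cg G ℓ ρ x * (gradMat (favre G ℓ ρ v) x i j * favreStress G ℓ ρ v x i j)|
      ≤ (∫ r, ‖fderiv ℝ G r‖) * ℓ⁻¹ * (R * (2 * c)) * (2 * c ^ 2) := fun i j => by
    have h1 := abs_gradMat_favre_le hG hℓ hρ hρ0 hρR hv hvC hinc hpos i j
    rw [← mul_assoc, abs_mul]
    exact mul_le_mul h1 (abs_favreStress_le hG hℓ hρ hρ0 hρR hv hvC hinc hpos i j)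
      (abs_nonneg _) ((abs_nonneg _).trans h1)
  refine (Finset.abs_sum_le_sum_abs _ _).trans ((Finset.sum_le_sum fun i _ =>
    (Finset.abs_sum_le_sum_abs _ _).trans (Finset.sum_le_sum fun j _ => hterm i j)).trans ?_)
  simp

end Favre

end QT

open QT in
/-- deformation work bound `|Π_ℓ(x)| ≤ C ℓ^{3h−1}` for `ℓ ∈ (0,ℓ₀]`,
with `C` depending only on `G, d, R, A, B, M, h, ℓ₀`. -/
theorem deformWork_le {d : ℕ} (hd : 1 ≤ d)
    (G : Euc d → ℝ) (hG : IsMollifier G)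
    (R A B M h ℓ₀ : ℝ) (hR : 0 < R) (hA : 0 < A) (hB : 0 < B) (hM : 0 < M)
    (hh : h ∈ Set.Ioc (0 : ℝ) 1) (hℓ₀ : 0 < ℓ₀) :
    ∃ C > 0, ∀ (ρ : Euc d → ℝ) (v : Euc d → Euc d) (Cv : ℝ) (x : Euc d),
      Measurable ρ → (∀ y, 0 ≤ ρ y) → (∀ y, ρ y ≤ R) →
      Measurable v → (∀ y, ‖v y‖ ≤ Cv) →
      (∀ ℓ ∈ Set.Ioc (0 : ℝ) ℓ₀,
        supIncr v ℓ x ≤ A * ℓ ^ h ∧ supIncr ρ ℓ x ≤ B * ℓ ∧ 1 / M ≤ cg G ℓ ρ x) →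
      ∀ ℓ ∈ Set.Ioc (0 : ℝ) ℓ₀,
        |deformWork G ℓ ρ v x| ≤ C * ℓ ^ (3 * h - 1) := by
  have hK0 : 0 ≤ ∫ r, ‖fderiv ℝ G r‖ := integral_nonneg fun r => norm_nonneg _
  set K := ∫ r, ‖fderiv ℝ G r‖ with hK
  -- The summand `1` only makes `C` positive.
  refine ⟨4 * d ^ 2 * K * R * A ^ 3 + 1, by positivity, ?_⟩
  intro ρ v Cv x hρ hρ0 hρR hv hvC hyp ℓ hℓ
  obtain ⟨hvi, -, hlow⟩ := hyp ℓ hℓ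
  have hℓ0 : 0 < ℓ := hℓ.1
  have hpos : 0 < cg G ℓ ρ x := (by positivity : 0 < 1 / M).trans_le hlow
  have hpow : ℓ⁻¹ * (ℓ ^ h) ^ 3 = ℓ ^ (3 * h - 1) := by
    rw [Real.rpow_sub hℓ0, Real.rpow_one, mul_comm 3 h, Real.rpow_mul hℓ0.le, inv_mul_eq_div]
    norm_cast
  refine (abs_deformWork_le hG hℓ0 hρ hρ0 hρR hv hvC
    (fun r hr => norm_incr_le hvC hvi hr) hpos).trans ?_
  rw [← hpow, ← hK]
  have h0 : 0 ≤ ℓ⁻¹ * (ℓ ^ h) ^ 3 := by positivity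
  nlinarith
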